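/- arXiv:1901.08663 — 7 statements merged into one kernel-verified Lean document; each statement's English description precedes it below -/
import Mathlib

section
/- Let the stepsize μ > 0. Suppose that for some optimal point x* ∈ X* there exists a measurable selection of subgradients g_F(x*;ξ) ∈ ∂F(x*;ξ) with E_ξ[g_F(x*;ξ)] = 0 and E_ξ[‖g_F(x*;ξ)‖²] ≤ S*_F < ∞. Then for every x ∈ ℝ^n one has F* − F_μ(x) ≤ (μ/2)·E_ξ[‖g_F(x*;ξ)‖²] ≤ (μ/2)·S*_F. -/
/- Statement 0: Lemma `lemma_auxres` (ii).
For the stochastic problem `min_x F(x) = E_ξ[F(x;ξ)]` with proper convex lsc components,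
if at an optimal point `x* ∈ X*` there is a subgradient selection `g_F(x*;ξ) ∈ ∂F(x*;ξ)`
with `E[g_F(x*;ξ)] = 0` and `E[‖g_F(x*;ξ)‖²] ≤ S*_F < ∞`, then for all `x`:
`F* − F_μ(x) ≤ (μ/2)·E[‖g_F(x*;ξ)‖²] ≤ (μ/2)·S*_F`.

Extended-real-valued proper functions `F(·;ξ)` are modelled by their effective domain
`D ξ` (nonempty, so proper) together with real values `F ξ` on it; lower semicontinuity is
expressed by closedness of the epigraph.  The Moreau envelope `F_μ(x;ξ)` is the infimum of
`F(z;ξ) + ‖z − x‖²/(2μ)` over the effective domain, and `F_μ(x) = E_ξ[F_μ(x;ξ)]`. -/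

open MeasureTheory Metric Set
open scoped RealInnerProductSpace

noncomputable section

theorem spp_lemma_auxres_ii
    {n : ℕ} {Ω : Type} [MeasurableSpace Ω] (P : Measure Ω) [IsProbabilityMeasure P]
    -- the components F(·;ξ): effective domain D ξ and real values F ξ on it
    (D : Ω → Set (EuclideanSpace ℝ (Fin n)))
    (F : Ω → EuclideanSpace ℝ (Fin n) → ℝ)
    -- proper, convex, lower semicontinuous
    (hDne : ∀ ξ, (D ξ).Nonempty)
    (hDconv : ∀ ξ, Convex ℝ (D ξ))
    (hFconv : ∀ ξ, ConvexOn ℝ (D ξ) (F ξ))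
    (hFlsc : ∀ ξ, IsClosed {p : EuclideanSpace ℝ (Fin n) × ℝ | p.1 ∈ D ξ ∧ F ξ p.1 ≤ p.2})
    -- the optimal set X* (argmin of F = E[F(·;ξ)]) and the optimal value F*
    (Xstar : Set (EuclideanSpace ℝ (Fin n))) (Fstar : ℝ)
    (hXstar : ∀ x, x ∈ Xstar ↔
      ((∀ ξ, x ∈ D ξ) ∧ Integrable (fun ξ => F ξ x) P ∧ ∫ ξ, F ξ x ∂P = Fstar))
    (hFmin : ∀ x, (∀ ξ, x ∈ D ξ) → Integrable (fun ξ => F ξ x) P → Fstar ≤ ∫ ξ, F ξ x ∂P)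
    -- an optimal point
    (xstar : EuclideanSpace ℝ (Fin n)) (hxstar : xstar ∈ Xstar)
    -- a measurable selection of subgradients g_F(x*;ξ) ∈ ∂F(x*;ξ)
    (g : Ω → EuclideanSpace ℝ (Fin n)) (SF : ℝ)
    (hg : ∀ ξ, ∀ y ∈ D ξ, F ξ xstar + ⟪g ξ, y - xstar⟫ ≤ F ξ y)
    (hgint : Integrable g P)
    (hgmean : (∫ ξ, g ξ ∂P) = 0)
    (hg2int : Integrable (fun ξ => ‖g ξ‖ ^ 2) P)
    (hSF : (∫ ξ, ‖g ξ‖ ^ 2 ∂P) ≤ SF)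
    -- the stepsize μ > 0 and the Moreau envelope F_μ(x;ξ), F_μ(x) = E[F_μ(x;ξ)]
    (μ : ℝ) (hμ : 0 < μ)
    (Fmu : Ω → EuclideanSpace ℝ (Fin n) → ℝ)
    (hFmu : ∀ ξ x, Fmu ξ x = ⨅ z : D ξ,
      (F ξ z + ‖(z : EuclideanSpace ℝ (Fin n)) - x‖ ^ 2 / (2 * μ)))
    (hFmuint : ∀ x, Integrable (fun ξ => Fmu ξ x) P) :
    ∀ x, Fstar - (∫ ξ, Fmu ξ x ∂P) ≤ μ / 2 * ∫ ξ, ‖g ξ‖ ^ 2 ∂P ∧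
      μ / 2 * (∫ ξ, ‖g ξ‖ ^ 2 ∂P) ≤ μ / 2 * SF := by
  intro x
  refine ⟨?_, mul_le_mul_of_nonneg_left hSF (by positivity)⟩
  obtain ⟨-, hFint, hFeq⟩ := (hXstar xstar).1 hxstar
  have hpt : ∀ ξ, F ξ xstar + ⟪x - xstar, g ξ⟫ - μ / 2 * ‖g ξ‖ ^ 2 ≤ Fmu ξ x := by
    intro ξ
    rw [hFmu]
    haveI : Nonempty (D ξ) := (hDne ξ).to_subtype
    refine le_ciInf fun z => ?_
    have h1 := hg ξ z z.2
    have h2 : ⟪g ξ, (z : EuclideanSpace ℝ (Fin n)) - xstar⟫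
        = ⟪g ξ, (z : EuclideanSpace ℝ (Fin n)) - x⟫ + ⟪x - xstar, g ξ⟫ := by
      rw [real_inner_comm (g ξ) (x - xstar), ← inner_add_right, sub_add_sub_cancel]
    have h3 := neg_le_of_abs_le
      (abs_real_inner_le_norm (g ξ) ((z : EuclideanSpace ℝ (Fin n)) - x))
    have h4 : ‖g ξ‖ * ‖(z : EuclideanSpace ℝ (Fin n)) - x‖
        ≤ μ / 2 * ‖g ξ‖ ^ 2 + ‖(z : EuclideanSpace ℝ (Fin n)) - x‖ ^ 2 / (2 * μ) := by
      have h5 : μ / 2 * ‖g ξ‖ ^ 2 + ‖(z : EuclideanSpace ℝ (Fin n)) - x‖ ^ 2 / (2 * μ)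
          - ‖g ξ‖ * ‖(z : EuclideanSpace ℝ (Fin n)) - x‖
          = (μ * ‖g ξ‖ - ‖(z : EuclideanSpace ℝ (Fin n)) - x‖) ^ 2 / (2 * μ) := by
        field_simp
        ring
      have h6 : 0 ≤ (μ * ‖g ξ‖ - ‖(z : EuclideanSpace ℝ (Fin n)) - x‖) ^ 2 / (2 * μ) := by
        positivity
      linarith
    linarith
  have hi : Integrable (fun ξ => ⟪x - xstar, g ξ⟫) P := hgint.const_inner _
  have hi0 : ∫ ξ, ⟪x - xstar, g ξ⟫ ∂P = 0 := by
    rw [integral_inner hgint, hgmean, inner_zero_right]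
  have hq := hg2int.const_mul (μ / 2)
  have hfi : Integrable (fun ξ => F ξ xstar + ⟪x - xstar, g ξ⟫) P := hFint.add hi
  have hm := integral_mono (hfi.sub hq) (hFmuint x) hpt
  have he : ∫ ξ, (F ξ xstar + ⟪x - xstar, g ξ⟫ - μ / 2 * ‖g ξ‖ ^ 2) ∂P
      = Fstar - μ / 2 * ∫ ξ, ‖g ξ‖ ^ 2 ∂P := by
    rw [integral_sub hfi hq, integral_add hFint hi, hi0, hFeq, integral_const_mul, add_zero]
  have hm2 : ∫ ξ, (F ξ xstar + ⟪x - xstar, g ξ⟫ - μ / 2 * ‖g ξ‖ ^ 2) ∂P ≤ ∫ ξ, Fmu ξ x ∂P := hm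
  linarith
end
end

section
/- Suppose each f(·;ξ): ℝ^n → ℝ is convex, differentiable, and its gradient is Lipschitz continuous with constant L_ξ. Then for every μ > 0 and every x ∈ ℝ^n: E_ξ[ ‖∇f(x;ξ)‖² / (1 + L_ξ μ)² ] ≤ E_ξ[ ‖∇f_μ(x;ξ)‖² ]. -/
/- Statement 2: Theorem `lemma_gradorder`.
If each `f(·;ξ)` is convex differentiable with `L_ξ`-Lipschitz gradient, then for every
`μ > 0` and every `x`:
`E_ξ[ ‖∇f(x;ξ)‖²/(1 + L_ξ μ)² ] ≤ E_ξ[ ‖∇f_μ(x;ξ)‖² ]`,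
where `∇f_μ(x;ξ) = (x − z_μ(x;ξ))/μ` and `z_μ(x;ξ)` is the proximal point of `f(·;ξ)`. -/

open MeasureTheory Metric Set
open scoped RealInnerProductSpace

noncomputable section

theorem spp_lemma_gradorder
    {n : ℕ} {Ω : Type} [MeasurableSpace Ω] (P : Measure Ω) [IsProbabilityMeasure P]
    (f : Ω → EuclideanSpace ℝ (Fin n) → ℝ)
    (fgrad : Ω → EuclideanSpace ℝ (Fin n) → EuclideanSpace ℝ (Fin n))
    (L : Ω → ℝ)
    (hconv : ∀ ξ, ConvexOn ℝ Set.univ (f ξ))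
    (hgrad : ∀ ξ x, HasGradientAt (f ξ) (fgrad ξ x) x)
    (hLnonneg : ∀ ξ, 0 ≤ L ξ)
    (hLip : ∀ ξ x y, ‖fgrad ξ x - fgrad ξ y‖ ≤ L ξ * ‖x - y‖)
    -- the stepsize and the proximal operator z_μ(x;ξ)
    (μ : ℝ) (hμ : 0 < μ)
    (prox : EuclideanSpace ℝ (Fin n) → Ω → EuclideanSpace ℝ (Fin n))
    (hprox : ∀ x ξ y, f ξ (prox x ξ) + ‖prox x ξ - x‖ ^ 2 / (2 * μ)
      ≤ f ξ y + ‖y - x‖ ^ 2 / (2 * μ))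
    -- integrability of both sides
    (hint1 : ∀ x, Integrable (fun ξ => ‖fgrad ξ x‖ ^ 2 / (1 + L ξ * μ) ^ 2) P)
    (hint2 : ∀ x, Integrable (fun ξ => ‖μ⁻¹ • (x - prox x ξ)‖ ^ 2) P) :
    ∀ x, (∫ ξ, ‖fgrad ξ x‖ ^ 2 / (1 + L ξ * μ) ^ 2 ∂P)
      ≤ ∫ ξ, ‖μ⁻¹ • (x - prox x ξ)‖ ^ 2 ∂P := by
  intro x
  apply integral_mono (hint1 x) (hint2 x)
  intro ξ
  have hfd : HasFDerivAt (fun y => f ξ y + ‖y - x‖ ^ 2 / (2 * μ))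
      (innerSL ℝ (fgrad ξ (prox x ξ)) +
        (2 * μ)⁻¹ • ((2 : ℝ) • innerSL ℝ (prox x ξ - x))) (prox x ξ) := by
    have h1 : HasFDerivAt (f ξ) (innerSL ℝ (fgrad ξ (prox x ξ))) (prox x ξ) :=
      (hgrad ξ (prox x ξ)).hasFDerivAt
    have h2 : HasFDerivAt (fun y => ‖y - x‖ ^ 2)
        ((2 : ℝ) • innerSL ℝ (prox x ξ - x)) (prox x ξ) := by
      have h := ((hasFDerivAt_id (𝕜 := ℝ) (prox x ξ)).sub_const x).norm_sq
      refine h.congr_fderiv ?_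
      ext v
      simp [two_smul, two_mul]
    have h3 := h1.add (h2.const_smul ((2 * μ)⁻¹))
    refine h3.congr_of_eventuallyEq (Filter.Eventually.of_forall fun y => ?_)
    simp only [Pi.add_apply, Pi.smul_apply, smul_eq_mul]
    rw [div_eq_inv_mul]
  have hmin : IsLocalMin (fun y => f ξ y + ‖y - x‖ ^ 2 / (2 * μ)) (prox x ξ) :=
    Filter.Eventually.of_forall fun y => hprox x ξ y
  have h0 := hmin.hasFDerivAt_eq_zero hfd
  have hg : fgrad ξ (prox x ξ) = μ⁻¹ • (x - prox x ξ) := by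
    refine ext_inner_right ℝ fun v => ?_
    have h := DFunLike.congr_fun h0 v
    simp only [ContinuousLinearMap.add_apply, ContinuousLinearMap.smul_apply,
      innerSL_apply_apply, smul_eq_mul, ContinuousLinearMap.zero_apply,
      inner_sub_left] at h
    rw [real_inner_smul_left, inner_sub_left]
    field_simp at h ⊢
    linarith
  have hx : ‖x - prox x ξ‖ = μ * ‖μ⁻¹ • (x - prox x ξ)‖ := by
    rw [norm_smul, Real.norm_of_nonneg (inv_nonneg.2 hμ.le)]
    field_simp
  have hl := hLip ξ x (prox x ξ)
  have ht := norm_le_norm_add_norm_sub' (fgrad ξ x) (fgrad ξ (prox x ξ))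
  rw [hg] at hl ht
  rw [hx] at hl
  have hpos : 0 < 1 + L ξ * μ := by
    have := mul_nonneg (hLnonneg ξ) hμ.le
    linarith
  show ‖fgrad ξ x‖ ^ 2 / (1 + L ξ * μ) ^ 2 ≤ ‖μ⁻¹ • (x - prox x ξ)‖ ^ 2
  rw [div_le_iff₀ (by positivity), ← mul_pow]
  apply pow_le_pow_left₀ (norm_nonneg _)
  linarith
end
end

section
/- Suppose F = E_ξ[F(·;ξ)] has nonempty optimal set X*, there is a subgradient selection at some x* ∈ X* with E_ξ[g_F(x*;ξ)] = 0 and E_ξ[‖g_F(x*;ξ)‖²] ≤ S*_F, and F satisfies the weak linear regularity property with constants σ_{F,μ} and β. Then for every x ∈ ℝ^n and every μ > 0, one proximal step satisfies E_ξ[ dist_{X*}²( z_μ(x;ξ) ) ] ≤ (1 − μ σ_{F,μ})·dist_{X*}²(x) + μ²·( E_ξ[‖g_F(x*;ξ)‖²] + 2β ). -/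
/- Statement 8: one-step decrease of SPP (proof of Theorem `th_recurence`).
Under weak linear regularity with constants `σ_{F,μ}`, `β`, and a zero-mean subgradient
selection at an optimal point with second moment at most `S*_F`, one proximal step
satisfies for every `x` and `μ > 0`:
`E_ξ[dist²_{X*}(z_μ(x;ξ))] ≤ (1 − μσ_{F,μ})·dist²_{X*}(x) + μ²(E[‖g_F(x*;ξ)‖²] + 2β)`.
Proper convex lsc components are modelled by effective domain `D ξ` + real values;
`z_μ(x;ξ)` is the minimizer of `F(z;ξ) + ‖z−x‖²/(2μ)` and
`F_μ(x) = E_ξ[F(z_μ(x;ξ);ξ) + ‖z_μ(x;ξ)−x‖²/(2μ)]`. -/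

open MeasureTheory Metric Set
open scoped RealInnerProductSpace

noncomputable section

/-- Three-point inequality for the proximal point of a convex function. -/
theorem prox_three_point {E : Type*} [NormedAddCommGroup E] [InnerProductSpace ℝ E]
    (D : Set E) (f : E → ℝ) (hf : ConvexOn ℝ D f) (μ : ℝ) (hμ : 0 < μ) (x z y : E)
    (hz : z ∈ D) (hy : y ∈ D)
    (hmin : ∀ y ∈ D, f z + ‖z - x‖ ^ 2 / (2 * μ) ≤ f y + ‖y - x‖ ^ 2 / (2 * μ)) :
    ‖z - y‖ ^ 2 ≤ ‖x - y‖ ^ 2 + 2 * μ * (f y - (f z + ‖z - x‖ ^ 2 / (2 * μ))) := by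
  have key : ∀ t : ℝ, 0 < t → t < 1 → (1 - t) * ‖z - y‖ ^ 2 ≤
      ‖x - y‖ ^ 2 + 2 * μ * (f y - (f z + ‖z - x‖ ^ 2 / (2 * μ))) := by
    intro t h0 h1
    have hc := hf.2 hz hy (by linarith : (0:ℝ) ≤ 1 - t) h0.le (by ring)
    have hw := hmin _ (hf.1 hz hy (by linarith : (0:ℝ) ≤ 1 - t) h0.le (by ring))
    have hn : ‖(1 - t) • z + t • y - x‖ ^ 2
        = (1 - t) * ‖z - x‖ ^ 2 + t * ‖x - y‖ ^ 2 - t * (1 - t) * ‖z - y‖ ^ 2 := by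
      have e1 : (1 - t) • z + t • y - x = (z - x) - t • (z - y) := by module
      have e2 : x - y = (z - y) - (z - x) := by abel
      rw [e1, e2, norm_sub_sq_real, norm_sub_sq_real (z - y), inner_smul_right, norm_smul,
        real_inner_comm (z - x) (z - y), mul_pow, Real.norm_eq_abs, sq_abs]
      ring
    rw [hn] at hw
    simp only [smul_eq_mul] at hc
    have h2 := hw.trans (add_le_add_left hc _)
    have h3 : 2 * μ * (‖z - x‖ ^ 2 / (2 * μ)) = ‖z - x‖ ^ 2 := by field_simp
    have h4 := mul_le_mul_of_nonneg_left h2 (by positivity : (0:ℝ) ≤ 2 * μ)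
    have h5 : ∀ a : ℝ, 2 * μ * (a / (2 * μ)) = a := by intro a; field_simp
    rw [mul_add, mul_add, h5, h5] at h4
    rw [mul_sub, mul_add, h5]
    refine le_of_mul_le_mul_left ?_ h0
    nlinarith
  set c := ‖z - y‖ ^ 2 with hc
  set B := ‖x - y‖ ^ 2 + 2 * μ * (f y - (f z + ‖z - x‖ ^ 2 / (2 * μ))) with hB
  have c0 : 0 ≤ c := by positivity
  by_contra hlt
  push Not at hlt
  have b0 := key (1 / 2) (by norm_num) (by norm_num)
  have cpos : 0 < c := by linarith
  have hk := key ((c - B) / (2 * c)) (div_pos (by linarith) (by linarith))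
    (by rw [div_lt_one (by linarith)]; linarith)
  have : (1 - (c - B) / (2 * c)) * c = (c + B) / 2 := by field_simp; ring
  linarith

theorem spp_one_step_recurrence
    {n : ℕ} {Ω : Type} [MeasurableSpace Ω] (P : Measure Ω) [IsProbabilityMeasure P]
    -- the components F(·;ξ): proper convex lsc
    (D : Ω → Set (EuclideanSpace ℝ (Fin n)))
    (F : Ω → EuclideanSpace ℝ (Fin n) → ℝ)
    (hDne : ∀ ξ, (D ξ).Nonempty)
    (hDconv : ∀ ξ, Convex ℝ (D ξ))
    (hFconv : ∀ ξ, ConvexOn ℝ (D ξ) (F ξ))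
    (hFlsc : ∀ ξ, IsClosed {p : EuclideanSpace ℝ (Fin n) × ℝ | p.1 ∈ D ξ ∧ F ξ p.1 ≤ p.2})
    -- optimal set X* and optimal value F* of F = E[F(·;ξ)]
    (Xstar : Set (EuclideanSpace ℝ (Fin n))) (Fstar : ℝ)
    (hXstar : ∀ x, x ∈ Xstar ↔
      ((∀ ξ, x ∈ D ξ) ∧ Integrable (fun ξ => F ξ x) P ∧ ∫ ξ, F ξ x ∂P = Fstar))
    (hFmin : ∀ x, (∀ ξ, x ∈ D ξ) → Integrable (fun ξ => F ξ x) P → Fstar ≤ ∫ ξ, F ξ x ∂P)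
    -- zero-mean subgradient selection at an optimal point x*, second moment ≤ S*_F
    (xstar : EuclideanSpace ℝ (Fin n)) (hxstar : xstar ∈ Xstar)
    (g : Ω → EuclideanSpace ℝ (Fin n)) (SF : ℝ)
    (hg : ∀ ξ, ∀ y ∈ D ξ, F ξ xstar + ⟪g ξ, y - xstar⟫ ≤ F ξ y)
    (hgint : Integrable g P)
    (hgmean : (∫ ξ, g ξ ∂P) = 0)
    (hg2int : Integrable (fun ξ => ‖g ξ‖ ^ 2) P)
    (hSF : (∫ ξ, ‖g ξ‖ ^ 2 ∂P) ≤ SF)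
    -- proximal map z_μ(x;ξ) and integrability of the envelope
    (prox : ℝ → EuclideanSpace ℝ (Fin n) → Ω → EuclideanSpace ℝ (Fin n))
    (hprox : ∀ μ, 0 < μ → ∀ x ξ, prox μ x ξ ∈ D ξ ∧ ∀ y ∈ D ξ,
      F ξ (prox μ x ξ) + ‖prox μ x ξ - x‖ ^ 2 / (2 * μ)
        ≤ F ξ y + ‖y - x‖ ^ 2 / (2 * μ))
    (hFmuint : ∀ μ, 0 < μ → ∀ x, Integrable
      (fun ξ => F ξ (prox μ x ξ) + ‖prox μ x ξ - x‖ ^ 2 / (2 * μ)) P)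
    -- optimal value F_μ* of the smoothed problem
    (Fmustar : ℝ → ℝ)
    (hFmustar : ∀ μ, 0 < μ → IsGLB
      (Set.range fun x => ∫ ξ, (F ξ (prox μ x ξ) + ‖prox μ x ξ - x‖ ^ 2 / (2 * μ)) ∂P)
      (Fmustar μ))
    -- weak linear regularity with constants σ_{F,μ} (nonincreasing in μ) and β ≥ 0
    (σ : ℝ → ℝ) (β : ℝ)
    (hσpos : ∀ μ, 0 < μ → 0 < σ μ)
    (hσmono : AntitoneOn σ (Set.Ioi (0 : ℝ)))
    (hβ : 0 ≤ β)
    (hWLR : ∀ μ, 0 < μ → ∀ x, σ μ / 2 * (infDist x Xstar) ^ 2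
      ≤ (∫ ξ, (F ξ (prox μ x ξ) + ‖prox μ x ξ - x‖ ^ 2 / (2 * μ)) ∂P) - Fmustar μ + μ * β)
    -- integrability of the one-step squared distance
    (hdint : ∀ μ, 0 < μ → ∀ x,
      Integrable (fun ξ => (infDist (prox μ x ξ) Xstar) ^ 2) P) :
    ∀ x, ∀ μ, 0 < μ →
      (∫ ξ, (infDist (prox μ x ξ) Xstar) ^ 2 ∂P)
        ≤ (1 - μ * σ μ) * (infDist x Xstar) ^ 2
          + μ ^ 2 * ((∫ ξ, ‖g ξ‖ ^ 2 ∂P) + 2 * β) := by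
  intro x μ hμ
  have hxs := (hXstar xstar).1 hxstar
  have hne : Xstar.Nonempty := ⟨xstar, hxstar⟩
  -- lower bound on the optimal value of the smoothed problem
  have hlow : Fstar - μ / 2 * (∫ ξ, ‖g ξ‖ ^ 2 ∂P) ≤ Fmustar μ := by
    refine (hFmustar μ hμ).2 ?_
    rintro _ ⟨u, rfl⟩
    have hinner : Integrable (fun ξ => ⟪u - xstar, g ξ⟫) P := hgint.const_inner _
    have hi0 : ∫ ξ, ⟪u - xstar, g ξ⟫ ∂P = 0 := by
      rw [integral_inner hgint, hgmean, inner_zero_right]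
    have heq : ∫ ξ, ((F ξ xstar + ⟪u - xstar, g ξ⟫) - μ / 2 * ‖g ξ‖ ^ 2) ∂P
        = Fstar - μ / 2 * (∫ ξ, ‖g ξ‖ ^ 2 ∂P) := by
      have hadd : Integrable (fun ξ => F ξ xstar + ⟪u - xstar, g ξ⟫) P := hxs.2.1.add hinner
      rw [integral_sub hadd (hg2int.const_mul _),
        integral_add hxs.2.1 hinner, hi0, hxs.2.2, integral_const_mul, add_zero]
    rw [← heq]
    refine integral_mono ((hxs.2.1.add hinner).sub (hg2int.const_mul _)) (hFmuint μ hμ u) ?_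
    intro ξ
    have h1 := hg ξ _ (hprox μ hμ u ξ).1
    have e1 : prox μ u ξ - xstar = (u - xstar) + (prox μ u ξ - u) := by abel
    rw [e1, inner_add_right, real_inner_comm] at h1
    have h2 : 0 ≤ ‖(prox μ u ξ - u) + μ • g ξ‖ ^ 2 / (2 * μ) := by positivity
    have h3 : ‖(prox μ u ξ - u) + μ • g ξ‖ ^ 2 / (2 * μ)
        = ‖prox μ u ξ - u‖ ^ 2 / (2 * μ) + ⟪g ξ, prox μ u ξ - u⟫ + μ / 2 * ‖g ξ‖ ^ 2 := by
      rw [norm_add_sq_real, inner_smul_right, norm_smul, mul_pow, Real.norm_eq_abs, sq_abs,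
        real_inner_comm]
      field_simp
    show (F ξ xstar + ⟪u - xstar, g ξ⟫) - μ / 2 * ‖g ξ‖ ^ 2
      ≤ F ξ (prox μ u ξ) + ‖prox μ u ξ - u‖ ^ 2 / (2 * μ)
    linarith
  set I := ∫ ξ, (F ξ (prox μ x ξ) + ‖prox μ x ξ - x‖ ^ 2 / (2 * μ)) ∂P with hI
  -- expected three-point inequality against every optimal point
  have hpt : ∀ y ∈ Xstar, (∫ ξ, (infDist (prox μ x ξ) Xstar) ^ 2 ∂P)
      ≤ dist x y ^ 2 + 2 * μ * (Fstar - I) := by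
    intro y hy
    have hys := (hXstar y).1 hy
    have heq : ∫ ξ, (‖x - y‖ ^ 2 + 2 * μ * (F ξ y -
        (F ξ (prox μ x ξ) + ‖prox μ x ξ - x‖ ^ 2 / (2 * μ)))) ∂P
        = dist x y ^ 2 + 2 * μ * (Fstar - I) := by
      have hsub : Integrable (fun ξ => F ξ y -
          (F ξ (prox μ x ξ) + ‖prox μ x ξ - x‖ ^ 2 / (2 * μ))) P :=
        hys.2.1.sub (hFmuint μ hμ x)
      rw [integral_add (integrable_const _) (hsub.const_mul _),
        integral_const_mul, integral_sub hys.2.1 (hFmuint μ hμ x), hys.2.2, dist_eq_norm]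
      simp [hI]
    rw [← heq]
    refine integral_mono (hdint μ hμ x) ((integrable_const _).add
      ((hys.2.1.sub (hFmuint μ hμ x)).const_mul _)) ?_
    intro ξ
    have h1 := prox_three_point (D ξ) (F ξ) (hFconv ξ) μ hμ x (prox μ x ξ) y
      (hprox μ hμ x ξ).1 (hys.1 ξ) (hprox μ hμ x ξ).2
    refine le_trans ?_ h1
    have h2 := infDist_le_dist_of_mem (x := prox μ x ξ) hy
    rw [dist_eq_norm] at h2
    exact pow_le_pow_left₀ infDist_nonneg h2 2
  have hd : (∫ ξ, (infDist (prox μ x ξ) Xstar) ^ 2 ∂P)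
      ≤ infDist x Xstar ^ 2 + 2 * μ * (Fstar - I) := by
    set A := ∫ ξ, (infDist (prox μ x ξ) Xstar) ^ 2 ∂P
    have h1 : Real.sqrt (A - 2 * μ * (Fstar - I)) ≤ infDist x Xstar := by
      rw [le_infDist hne]
      intro y hy
      exact Real.sqrt_le_iff.2 ⟨dist_nonneg, by linarith [hpt y hy]⟩
    have h2 := (Real.sqrt_le_iff.1 h1).2
    linarith
  have hw := mul_le_mul_of_nonneg_left (hWLR μ hμ x) (by positivity : (0:ℝ) ≤ 2 * μ)
  have hl := mul_le_mul_of_nonneg_left hlow (by positivity : (0:ℝ) ≤ 2 * μ)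
  rw [← hI] at hw
  nlinarith
end
end

section
/- Suppose F = E_ξ[F(·;ξ)] has nonempty optimal set X*, there is a subgradient selection at some x* ∈ X* with E_ξ[g_F(x*;ξ)] = 0 and E_ξ[‖g_F(x*;ξ)‖²] ≤ S*_F, and F satisfies the weak linear regularity property with constants σ_{F,μ} (nonincreasing in μ) and β. Let {μ_k}_{k≥0} be a nonincreasing positive stepsize sequence with μ_k σ_{F,μ_0} ≤ 1 for all k, and let {x^k} be generated by the SPP algorithm. Then for all k ≥ 0: E[ dist_{X*}²(x^{k+1}) ] ≤ [ ∏_{i=0}^{k} (1 − μ_i σ_{F,μ_0}) ]·dist_{X*}²(x^0) + (S*_F + 2β)·∑_{i=0}^{k} [ ∏_{j=i+1}^{k} (1 − μ_j σ_{F,μ_0}) ]·μ_i². -/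
/- Statement 9: Theorem `th_recurence`.
Under weak linear regularity (constants `σ_{F,μ}` nonincreasing in `μ`, `β ≥ 0`) and a
zero-mean subgradient selection at an optimal point with second moment `≤ S*_F`, the SPP
iterates `x^{k+1} = z_{μ_k}(x^k;ξ_k)` (i.i.d. samples `ξ_k ∼ P`, nonincreasing positive
stepsizes with `μ_k σ_{F,μ_0} ≤ 1`) satisfy, for all `k ≥ 0`,
`E[dist²_{X*}(x^{k+1})] ≤ (∏_{i=0}^k (1−μ_i σ_{F,μ_0}))·dist²_{X*}(x^0)
  + (S*_F + 2β)·∑_{i=0}^k (∏_{j=i+1}^k (1−μ_j σ_{F,μ_0}))·μ_i²`.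
The iterate `x^k` is a function of the first `k` samples, and the expectation is taken
with respect to the `k`-fold product measure. -/

open MeasureTheory Metric Set
open scoped RealInnerProductSpace

noncomputable section

/-- Prox three-point inequality. -/
theorem spp_aux_prox {n : ℕ} {D : Set (EuclideanSpace ℝ (Fin n))}
    {F : EuclideanSpace ℝ (Fin n) → ℝ} (hF : ConvexOn ℝ D F) {μ : ℝ} (hμ : 0 < μ)
    {p x z : EuclideanSpace ℝ (Fin n)} (hp : p ∈ D) (hz : z ∈ D)
    (hmin : ∀ y ∈ D, F p + ‖p - x‖ ^ 2 / (2 * μ) ≤ F y + ‖y - x‖ ^ 2 / (2 * μ)) :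
    ‖p - z‖ ^ 2 ≤ ‖x - z‖ ^ 2 + 2 * μ * (F z - (F p + ‖p - x‖ ^ 2 / (2 * μ))) := by
  have key : ∀ t : ℝ, 0 < t → t ≤ 1 →
      0 ≤ 2 * μ * (F z - F p) + 2 * ⟪z - p, p - x⟫ + t * ‖z - p‖ ^ 2 := by
    intro t ht ht1
    have hy := hF.1 hp hz (sub_nonneg.2 ht1) ht.le (by ring)
    have h1 := hF.2 hp hz (sub_nonneg.2 ht1) ht.le (by ring)
    have h2 := hmin _ hy
    have e : (1 - t) • p + t • z - x = (p - x) + t • (z - p) := by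
      module
    rw [e, norm_add_sq_real, norm_smul, inner_smul_right, Real.norm_eq_abs, mul_pow, sq_abs,
      real_inner_comm] at h2
    simp only [smul_eq_mul] at h1
    have h3 : 0 ≤ t * (F z - F p) + (2 * (t * ⟪z - p, p - x⟫) + t ^ 2 * ‖z - p‖ ^ 2) / (2 * μ) := by
      have : (‖p - x‖ ^ 2 + 2 * (t * ⟪z - p, p - x⟫) + t ^ 2 * ‖z - p‖ ^ 2) / (2 * μ)
        = ‖p - x‖ ^ 2 / (2 * μ) + (2 * (t * ⟪z - p, p - x⟫) + t ^ 2 * ‖z - p‖ ^ 2) / (2 * μ) := by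
        ring
      rw [this] at h2
      linarith
    have h4 : t * (F z - F p) + (2 * (t * ⟪z - p, p - x⟫) + t ^ 2 * ‖z - p‖ ^ 2) / (2 * μ)
      = (t / (2 * μ)) * (2 * μ * (F z - F p) + 2 * ⟪z - p, p - x⟫ + t * ‖z - p‖ ^ 2) := by
      field_simp
      ring
    rw [h4] at h3
    exact nonneg_of_mul_nonneg_right h3 (by positivity)
  have h0 : 0 ≤ 2 * μ * (F z - F p) + 2 * ⟪z - p, p - x⟫ := by
    by_contra hneg
    push Not at hneg
    set c := 2 * μ * (F z - F p) + 2 * ⟪z - p, p - x⟫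
    have hN : 0 ≤ ‖z - p‖ ^ 2 := by positivity
    have hd : 0 < ‖z - p‖ ^ 2 - c := by linarith
    have := key (-c / (2 * (‖z - p‖ ^ 2 - c))) (by apply div_pos <;> linarith)
      (by rw [div_le_one (by linarith)]; linarith)
    have h5 : -c / (2 * (‖z - p‖ ^ 2 - c)) * ‖z - p‖ ^ 2 ≤ -c / 2 := by
      rw [div_mul_eq_mul_div, div_le_iff₀ (by linarith)]
      nlinarith
    linarith
  have e1 : ‖x - z‖ ^ 2 = ‖p - x‖ ^ 2 + 2 * ⟪z - p, p - x⟫ + ‖p - z‖ ^ 2 := by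
    have : x - z = -((z - p) + (p - x)) := by abel
    rw [this, norm_neg, norm_add_sq_real, norm_sub_rev z p]
    ring
  have e2 : 2 * μ * (F z - (F p + ‖p - x‖ ^ 2 / (2 * μ)))
      = 2 * μ * (F z - F p) - ‖p - x‖ ^ 2 := by
    field_simp
    ring
  rw [e1, e2]
  linarith

/-- One-step splitting of the (lower) Lebesgue integral, with no measurability assumption. -/
theorem spp_aux_split {Ω : Type} [MeasurableSpace Ω] (P : Measure Ω) [IsProbabilityMeasure P]
    (k : ℕ) (f : (Fin (k + 1) → Ω) → ENNReal) (G : (Fin k → Ω) → ENNReal)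
    (h : ∀ ω : Fin k → Ω, ∫⁻ ξ, f (Fin.snoc ω ξ) ∂P ≤ G ω) :
    ∫⁻ ω, f ω ∂(Measure.pi fun _ : Fin (k + 1) => P)
      ≤ ∫⁻ ω, G ω ∂(Measure.pi fun _ : Fin k => P) := by
  obtain ⟨fm, hm, hle, heq⟩ := exists_measurable_le_lintegral_eq
    (Measure.pi fun _ : Fin (k + 1) => P) f
  rw [heq]
  have mp := (measurePreserving_piFinSuccAbove (fun _ : Fin (k + 1) => P) (Fin.last k)).symm
  have hm2 : Measurable (fun a => fm
      ((MeasurableEquiv.piFinSuccAbove (fun _ : Fin (k + 1) => Ω) (Fin.last k)).symm a)) :=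
    hm.comp mp.measurable
  rw [← mp.lintegral_comp hm, lintegral_prod_symm _ hm2.aemeasurable]
  refine lintegral_mono fun ω => (lintegral_mono fun ξ => ?_).trans (h ω)
  refine (hle _).trans (le_of_eq ?_)
  congr 1
  simp [MeasurableEquiv.piFinSuccAbove, Fin.insertNthEquiv, Fin.insertNth_last']

theorem spp_recurrence_bound
    {n : ℕ} {Ω : Type} [MeasurableSpace Ω] (P : Measure Ω) [IsProbabilityMeasure P]
    -- the components F(·;ξ): proper convex lsc
    (D : Ω → Set (EuclideanSpace ℝ (Fin n)))
    (F : Ω → EuclideanSpace ℝ (Fin n) → ℝ)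
    (hDne : ∀ ξ, (D ξ).Nonempty)
    (hDconv : ∀ ξ, Convex ℝ (D ξ))
    (hFconv : ∀ ξ, ConvexOn ℝ (D ξ) (F ξ))
    (hFlsc : ∀ ξ, IsClosed {p : EuclideanSpace ℝ (Fin n) × ℝ | p.1 ∈ D ξ ∧ F ξ p.1 ≤ p.2})
    -- optimal set X* and optimal value F*
    (Xstar : Set (EuclideanSpace ℝ (Fin n))) (Fstar : ℝ)
    (hXstar : ∀ x, x ∈ Xstar ↔
      ((∀ ξ, x ∈ D ξ) ∧ Integrable (fun ξ => F ξ x) P ∧ ∫ ξ, F ξ x ∂P = Fstar))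
    (hFmin : ∀ x, (∀ ξ, x ∈ D ξ) → Integrable (fun ξ => F ξ x) P → Fstar ≤ ∫ ξ, F ξ x ∂P)
    -- zero-mean subgradient selection at an optimal point x*, second moment ≤ S*_F
    (xstar : EuclideanSpace ℝ (Fin n)) (hxstar : xstar ∈ Xstar)
    (g : Ω → EuclideanSpace ℝ (Fin n)) (SF : ℝ)
    (hg : ∀ ξ, ∀ y ∈ D ξ, F ξ xstar + ⟪g ξ, y - xstar⟫ ≤ F ξ y)
    (hgint : Integrable g P)
    (hgmean : (∫ ξ, g ξ ∂P) = 0)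
    (hg2int : Integrable (fun ξ => ‖g ξ‖ ^ 2) P)
    (hSF : (∫ ξ, ‖g ξ‖ ^ 2 ∂P) ≤ SF)
    -- proximal map z_μ(x;ξ), Moreau envelope integrability, F_μ*
    (prox : ℝ → EuclideanSpace ℝ (Fin n) → Ω → EuclideanSpace ℝ (Fin n))
    (hprox : ∀ μ, 0 < μ → ∀ x ξ, prox μ x ξ ∈ D ξ ∧ ∀ y ∈ D ξ,
      F ξ (prox μ x ξ) + ‖prox μ x ξ - x‖ ^ 2 / (2 * μ)
        ≤ F ξ y + ‖y - x‖ ^ 2 / (2 * μ))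
    (hFmuint : ∀ μ, 0 < μ → ∀ x, Integrable
      (fun ξ => F ξ (prox μ x ξ) + ‖prox μ x ξ - x‖ ^ 2 / (2 * μ)) P)
    (Fmustar : ℝ → ℝ)
    (hFmustar : ∀ μ, 0 < μ → IsGLB
      (Set.range fun x => ∫ ξ, (F ξ (prox μ x ξ) + ‖prox μ x ξ - x‖ ^ 2 / (2 * μ)) ∂P)
      (Fmustar μ))
    -- weak linear regularity with constants σ_{F,μ} (nonincreasing in μ) and β ≥ 0
    (σ : ℝ → ℝ) (β : ℝ)
    (hσpos : ∀ μ, 0 < μ → 0 < σ μ)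
    (hσmono : AntitoneOn σ (Set.Ioi (0 : ℝ)))
    (hβ : 0 ≤ β)
    (hWLR : ∀ μ, 0 < μ → ∀ x, σ μ / 2 * (infDist x Xstar) ^ 2
      ≤ (∫ ξ, (F ξ (prox μ x ξ) + ‖prox μ x ξ - x‖ ^ 2 / (2 * μ)) ∂P) - Fmustar μ + μ * β)
    -- stepsizes: positive, nonincreasing, μ_k σ_{F,μ_0} ≤ 1
    (μs : ℕ → ℝ)
    (hμpos : ∀ k, 0 < μs k)
    (hμmono : ∀ k, μs (k + 1) ≤ μs k)
    (hμσ : ∀ k, μs k * σ (μs 0) ≤ 1)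
    -- the SPP trajectory: x^k is a function of the first k i.i.d. samples
    (x0 : EuclideanSpace ℝ (Fin n))
    (traj : (k : ℕ) → (Fin k → Ω) → EuclideanSpace ℝ (Fin n))
    (htraj0 : ∀ ω, traj 0 ω = x0)
    (htrajS : ∀ k (ω : Fin (k + 1) → Ω),
      traj (k + 1) ω = prox (μs k) (traj k fun i => ω i.castSucc) (ω (Fin.last k))) :
    ∀ k : ℕ,
      (∫ ω, (infDist (traj (k + 1) ω) Xstar) ^ 2 ∂(Measure.pi fun _ : Fin (k + 1) => P))
        ≤ (∏ i ∈ Finset.range (k + 1), (1 - μs i * σ (μs 0))) * (infDist x0 Xstar) ^ 2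
          + (SF + 2 * β) * ∑ i ∈ Finset.range (k + 1),
              (∏ j ∈ Finset.Icc (i + 1) k, (1 - μs j * σ (μs 0))) * μs i ^ 2 := by
  classical
  have hXne : Xstar.Nonempty := ⟨xstar, hxstar⟩
  set s0 := σ (μs 0) with hs0
  have hs0pos : 0 < s0 := hσpos _ (hμpos 0)
  have hμle : ∀ k, μs k ≤ μs 0 := fun k => antitone_nat_of_succ_le hμmono (Nat.zero_le k)
  have hSFnn : 0 ≤ SF := le_trans (integral_nonneg fun ξ => by positivity) hSF
  have hc : 0 ≤ SF + 2 * β := by linarith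
  have ha : ∀ k, 0 ≤ 1 - μs k * s0 := fun k => by linarith [hμσ k]
  -- lower bound on the optimal value of the envelope
  have hlow : ∀ μ, 0 < μ → Fstar - μ / 2 * SF ≤ Fmustar μ := by
    intro μ hμ
    refine (le_isGLB_iff (hFmustar μ hμ)).2 ?_
    rintro _ ⟨x, rfl⟩
    obtain ⟨hD, hI, hv⟩ := (hXstar xstar).1 hxstar
    have hi1 : Integrable (fun ξ => ⟪g ξ, x - xstar⟫) P := hgint.inner_const _
    have hi2 : Integrable (fun ξ => μ / 2 * ‖g ξ‖ ^ 2) P := hg2int.const_mul _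
    have hpt : ∀ ξ, F ξ xstar + ⟪g ξ, x - xstar⟫ - μ / 2 * ‖g ξ‖ ^ 2
        ≤ F ξ (prox μ x ξ) + ‖prox μ x ξ - x‖ ^ 2 / (2 * μ) := by
      intro ξ
      have h1 := hg ξ _ (hprox μ hμ x ξ).1
      have e : prox μ x ξ - xstar = (prox μ x ξ - x) + (x - xstar) := by abel
      rw [e, inner_add_right] at h1
      have h2 : 0 ≤ ‖μ • g ξ + (prox μ x ξ - x)‖ ^ 2 := by positivity
      rw [norm_add_sq_real, norm_smul, inner_smul_left, Real.norm_eq_abs, mul_pow, sq_abs] at h2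
      simp only [conj_trivial] at h2
      have h3 : μ / 2 * ‖g ξ‖ ^ 2 + ⟪g ξ, prox μ x ξ - x⟫ + ‖prox μ x ξ - x‖ ^ 2 / (2 * μ)
        = (μ ^ 2 * ‖g ξ‖ ^ 2 + 2 * (μ * ⟪g ξ, prox μ x ξ - x⟫) + ‖prox μ x ξ - x‖ ^ 2)
          / (2 * μ) := by
        field_simp
      have h4 := div_nonneg h2 (show 0 ≤ 2 * μ by linarith)
      linarith
    have h := integral_mono ((hI.add hi1).sub hi2) (hFmuint μ hμ x) hpt
    have e : ∫ ξ, (F ξ xstar + ⟪g ξ, x - xstar⟫ - μ / 2 * ‖g ξ‖ ^ 2) ∂P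
        = Fstar - μ / 2 * ∫ ξ, ‖g ξ‖ ^ 2 ∂P := by
      have hi3 : Integrable (fun ξ => F ξ xstar + ⟪g ξ, x - xstar⟫) P := hI.add hi1
      rw [integral_sub hi3 hi2, integral_add hI hi1, integral_const_mul, hv]
      have : ∫ ξ, ⟪g ξ, x - xstar⟫ ∂P = 0 := by
        have h0 := integral_inner (𝕜 := ℝ) hgint (x - xstar)
        rw [hgmean, inner_zero_right] at h0
        rw [← h0]
        exact integral_congr_ae (Filter.Eventually.of_forall fun ξ => real_inner_comm _ _)
      rw [this, add_zero]
    have hfin : Fstar - μ / 2 * ∫ ξ, ‖g ξ‖ ^ 2 ∂P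
        ≤ ∫ ξ, (F ξ (prox μ x ξ) + ‖prox μ x ξ - x‖ ^ 2 / (2 * μ)) ∂P := by
      rw [← e]; exact h
    have := mul_le_mul_of_nonneg_left hSF (show 0 ≤ μ / 2 by linarith)
    exact le_trans (by linarith) hfin
  -- one step bound
  have hstep : ∀ k x, ∫⁻ ξ, ENNReal.ofReal (infDist (prox (μs k) x ξ) Xstar ^ 2) ∂P
      ≤ ENNReal.ofReal ((1 - μs k * s0) * infDist x Xstar ^ 2 + (SF + 2 * β) * μs k ^ 2) := by
    intro k x
    have hμ := hμpos k
    set μ := μs k with hμdef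
    set L := ∫⁻ ξ, ENNReal.ofReal (infDist (prox μ x ξ) Xstar ^ 2) ∂P with hL
    set d := infDist x Xstar with hd
    have hd0 : 0 ≤ d := infDist_nonneg
    have hz : ∀ z ∈ Xstar, L ≤ ENNReal.ofReal
        (‖x - z‖ ^ 2 - μ * s0 * d ^ 2 + (SF + 2 * β) * μ ^ 2) := by
      intro z hz
      obtain ⟨hD, hI, hv⟩ := (hXstar z).1 hz
      have hintg : Integrable (fun ξ => ‖x - z‖ ^ 2 + 2 * μ * (F ξ z -
          (F ξ (prox μ x ξ) + ‖prox μ x ξ - x‖ ^ 2 / (2 * μ)))) P :=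
        (integrable_const _).add ((hI.sub (hFmuint μ hμ x)).const_mul _)
      have hpt : ∀ ξ, infDist (prox μ x ξ) Xstar ^ 2 ≤ ‖x - z‖ ^ 2 + 2 * μ * (F ξ z -
          (F ξ (prox μ x ξ) + ‖prox μ x ξ - x‖ ^ 2 / (2 * μ))) := by
        intro ξ
        refine le_trans ?_ (spp_aux_prox (hFconv ξ) hμ (hprox μ hμ x ξ).1 (hD ξ)
          (hprox μ hμ x ξ).2)
        have := infDist_le_dist_of_mem (x := prox μ x ξ) hz
        rw [dist_eq_norm] at this
        exact pow_le_pow_left₀ infDist_nonneg this 2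
      calc L ≤ ∫⁻ ξ, ENNReal.ofReal (‖x - z‖ ^ 2 + 2 * μ * (F ξ z -
          (F ξ (prox μ x ξ) + ‖prox μ x ξ - x‖ ^ 2 / (2 * μ)))) ∂P :=
            lintegral_mono fun ξ => ENNReal.ofReal_le_ofReal (hpt ξ)
        _ = ENNReal.ofReal (∫ ξ, (‖x - z‖ ^ 2 + 2 * μ * (F ξ z -
          (F ξ (prox μ x ξ) + ‖prox μ x ξ - x‖ ^ 2 / (2 * μ)))) ∂P) := by
            rw [ofReal_integral_eq_lintegral_ofReal hintg]
            exact Filter.Eventually.of_forall fun ξ => le_trans (by positivity) (hpt ξ)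
        _ ≤ _ := by
            apply ENNReal.ofReal_le_ofReal
            have hi3 : Integrable (fun ξ => 2 * μ * (F ξ z -
                (F ξ (prox μ x ξ) + ‖prox μ x ξ - x‖ ^ 2 / (2 * μ)))) P :=
              (hI.sub (hFmuint μ hμ x)).const_mul _
            rw [integral_add (integrable_const _) hi3,
              integral_const_mul, integral_sub hI (hFmuint μ hμ x), hv]
            simp only [integral_const, probReal_univ, one_smul]
            have h1 := hWLR μ hμ x
            have h2 := hlow μ hμ
            have h3 : s0 ≤ σ μ := hσmono hμ (hμpos 0) (hμle k)
            have h4 : s0 * d ^ 2 ≤ σ μ * d ^ 2 := by gcongr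
            have h5 : Fstar - (∫ ξ, (F ξ (prox μ x ξ) + ‖prox μ x ξ - x‖ ^ 2 / (2 * μ)) ∂P)
              ≤ μ / 2 * SF + μ * β - s0 * d ^ 2 / 2 := by linarith
            have h6 := mul_le_mul_of_nonneg_left h5 (show 0 ≤ 2 * μ by linarith)
            have h7 : 2 * μ * (μ / 2 * SF + μ * β - s0 * d ^ 2 / 2)
              = (SF + 2 * β) * μ ^ 2 - μ * s0 * d ^ 2 := by ring
            linarith
    have hLtop : L ≠ ⊤ := ne_top_of_le_ne_top ENNReal.ofReal_ne_top (hz xstar hxstar)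
    have hz' : ∀ z ∈ Xstar,
        L.toReal ≤ ‖x - z‖ ^ 2 - μ * s0 * d ^ 2 + (SF + 2 * β) * μ ^ 2 := by
      intro z hzz
      refine ENNReal.toReal_le_of_le_ofReal ?_ (hz z hzz)
      have h1 : d ≤ ‖x - z‖ := by
        have := infDist_le_dist_of_mem (x := x) hzz
        rwa [dist_eq_norm] at this
      have h2 : d ^ 2 ≤ ‖x - z‖ ^ 2 := pow_le_pow_left₀ hd0 h1 2
      have h3 := mul_nonneg (ha k) (sq_nonneg d)
      have h4 := mul_nonneg hc (sq_nonneg μ)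
      rw [← hμdef] at h3
      linarith
    rw [← ENNReal.ofReal_toReal hLtop]
    apply ENNReal.ofReal_le_ofReal
    by_contra hcon
    push Not at hcon
    set r := L.toReal + μ * s0 * d ^ 2 - (SF + 2 * β) * μ ^ 2 with hr
    have hdr : d ^ 2 < r := by linarith
    have hdr' : d < Real.sqrt r := Real.lt_sqrt_of_sq_lt hdr
    obtain ⟨z, hzX, hzd⟩ := (infDist_lt_iff hXne).1 hdr'
    rw [dist_eq_norm] at hzd
    have h1 := hz' z hzX
    have h2 : ‖x - z‖ ^ 2 < r := (Real.lt_sqrt (norm_nonneg _)).1 hzd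
    linarith
  -- induction on lower integrals
  have hind : ∀ k, ∫⁻ ω, ENNReal.ofReal (infDist (traj k ω) Xstar ^ 2)
        ∂(Measure.pi fun _ : Fin k => P)
      ≤ ENNReal.ofReal ((∏ i ∈ Finset.range k, (1 - μs i * s0)) * (infDist x0 Xstar) ^ 2
          + (SF + 2 * β) * ∑ i ∈ Finset.range k,
              (∏ j ∈ Finset.Ico (i + 1) k, (1 - μs j * s0)) * μs i ^ 2) := by
    intro k
    induction k with
    | zero => simp [htraj0]
    | succ k ih =>
      refine (spp_aux_split P k _ (fun ω => ENNReal.ofReal (1 - μs k * s0) *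
        ENNReal.ofReal (infDist (traj k ω) Xstar ^ 2)
          + ENNReal.ofReal ((SF + 2 * β) * μs k ^ 2)) ?_).trans ?_
      · intro ω
        have h := hstep k (traj k ω)
        rw [ENNReal.ofReal_add (mul_nonneg (ha k) (sq_nonneg _))
          (mul_nonneg hc (sq_nonneg _)), ENNReal.ofReal_mul (ha k)] at h
        simpa [htrajS] using h
      · rw [lintegral_add_right _ measurable_const,
          lintegral_const_mul' _ _ ENNReal.ofReal_ne_top, lintegral_const, measure_univ, mul_one]
        refine (add_le_add (mul_le_mul_right ih _) le_rfl).trans (le_of_eq ?_)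
        rw [← ENNReal.ofReal_mul (ha k), ← ENNReal.ofReal_add]
        · congr 1
          rw [Finset.prod_range_succ, Finset.sum_range_succ]
          have : ∑ i ∈ Finset.range k,
              (∏ j ∈ Finset.Ico (i + 1) (k + 1), (1 - μs j * s0)) * μs i ^ 2
            = (1 - μs k * s0) * ∑ i ∈ Finset.range k,
              (∏ j ∈ Finset.Ico (i + 1) k, (1 - μs j * s0)) * μs i ^ 2 := by
            rw [Finset.mul_sum]
            refine Finset.sum_congr rfl fun i hi => ?_
            rw [Finset.prod_Ico_succ_top (by have := Finset.mem_range.1 hi; omega)]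
            ring
          rw [this]
          simp only [Finset.Ico_self, Finset.prod_empty]
          ring
        · refine mul_nonneg (ha k) (add_nonneg (mul_nonneg (Finset.prod_nonneg fun i _ => ha i)
            (sq_nonneg _)) (mul_nonneg hc (Finset.sum_nonneg fun i _ =>
              mul_nonneg (Finset.prod_nonneg fun i _ => ha i) (sq_nonneg _))))
        · exact mul_nonneg hc (sq_nonneg _)
  intro k
  have hk := hind (k + 1)
  have hR : 0 ≤ (∏ i ∈ Finset.range (k + 1), (1 - μs i * s0)) * (infDist x0 Xstar) ^ 2
          + (SF + 2 * β) * ∑ i ∈ Finset.range (k + 1),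
              (∏ j ∈ Finset.Ico (i + 1) (k + 1), (1 - μs j * s0)) * μs i ^ 2 :=
    add_nonneg (mul_nonneg (Finset.prod_nonneg fun i _ => ha i)
            (sq_nonneg _)) (mul_nonneg hc (Finset.sum_nonneg fun i _ =>
              mul_nonneg (Finset.prod_nonneg fun i _ => ha i) (sq_nonneg _)))
  have hIcc : ∀ i, Finset.Icc (i + 1) k = Finset.Ico (i + 1) (k + 1) := by
    intro i
    ext j
    simp
  simp only [hIcc]
  by_cases hm : AEStronglyMeasurable (fun ω => infDist (traj (k + 1) ω) Xstar ^ 2)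
      (Measure.pi fun _ : Fin (k + 1) => P)
  · rw [integral_eq_lintegral_of_nonneg_ae
      (Filter.Eventually.of_forall fun ω => sq_nonneg _) hm]
    exact ENNReal.toReal_le_of_le_ofReal hR hk
  · rw [integral_non_aestronglyMeasurable hm]
    exact hR
end
end

section
/- Suppose F = E_ξ[F(·;ξ)] satisfies the weak linear regularity property with constants σ_{F,μ} and β = 0, and suppose the interpolation (shared-minimizer) condition holds: for every x* ∈ X* and every ξ ∈ Ω, 0 ∈ ∂F(x*;ξ). Then the SPP iterates with constant stepsize μ > 0 (with μ σ_{F,μ} ≤ 1) converge linearly: E[ dist_{X*}²(x^k) ] ≤ (1 − μ σ_{F,μ})^k · dist_{X*}²(x^0) for all k ≥ 0. -/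
/- Statement 12: Corollary `corr_linconv`.
If `F` satisfies weak linear regularity with constants `σ_{F,μ}` and `β = 0`, and the
interpolation (shared-minimizer) condition holds — `0 ∈ ∂F(x*;ξ)` for every `x* ∈ X*`
and every `ξ` — then constant-stepsize SPP (stepsize `μ > 0` with `μ σ_{F,μ} ≤ 1`)
converges linearly:
`E[dist²_{X*}(x^k)] ≤ (1 − μ σ_{F,μ})^k · dist²_{X*}(x^0)` for all `k ≥ 0`. -/

open MeasureTheory Metric Set
open scoped RealInnerProductSpace

noncomputable section

theorem spp_three_point {E : Type*} [NormedAddCommGroup E] [InnerProductSpace ℝ E]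
    (D : Set E) (f : E → ℝ) (hf : ConvexOn ℝ D f) (μ : ℝ) (hμ : 0 < μ) (x z y : E)
    (hz : z ∈ D) (hy : y ∈ D)
    (hmin : ∀ w ∈ D, f z + ‖z - x‖ ^ 2 / (2 * μ) ≤ f w + ‖w - x‖ ^ 2 / (2 * μ)) :
    ‖z - y‖ ^ 2 ≤ ‖y - x‖ ^ 2 + 2 * μ * f y - 2 * μ * (f z + ‖z - x‖ ^ 2 / (2 * μ)) := by
  have key : ∀ t : ℝ, 0 < t → t < 1 → (1 - t) * ‖z - y‖ ^ 2 ≤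
      ‖y - x‖ ^ 2 + 2 * μ * f y - 2 * μ * (f z + ‖z - x‖ ^ 2 / (2 * μ)) := by
    intro t ht ht1
    have h1 := hmin _ (hf.1 hz hy (sub_nonneg.2 ht1.le) ht.le (by ring))
    have h2 := hf.2 hz hy (sub_nonneg.2 ht1.le) ht.le (by ring)
    have e : ‖((1 - t) • z + t • y) - x‖ ^ 2 =
        (1 - t) * ‖z - x‖ ^ 2 + t * ‖y - x‖ ^ 2 - t * (1 - t) * ‖z - y‖ ^ 2 := by
      have e1 : ((1 - t) • z + t • y) - x = (1 - t) • (z - x) + t • (y - x) := by module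
      have e2 : z - y = (z - x) - (y - x) := by abel
      rw [e1, e2, norm_add_sq_real, norm_sub_sq_real (z - x) (y - x), norm_smul, norm_smul, inner_smul_left,
        inner_smul_right, mul_pow, mul_pow, Real.norm_eq_abs, Real.norm_eq_abs, sq_abs, sq_abs]
      simp only [conj_trivial]
      ring
    rw [e] at h1
    simp only [smul_eq_mul] at h2
    have hm : 2 * μ * (f z + ‖z - x‖ ^ 2 / (2 * μ)) = 2 * μ * f z + ‖z - x‖ ^ 2 := by
      field_simp
    have h3 := (h1.trans (add_le_add_left h2 _))
    have h4 := mul_le_mul_of_nonneg_left h3 (by positivity : 0 ≤ 2 * μ)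
    rw [hm, mul_add, mul_div_cancel₀ _ (by positivity : 2 * μ ≠ 0)] at h4
    rw [hm]
    refine le_of_mul_le_mul_left ?_ ht
    nlinarith
  have hc : Filter.Tendsto (fun t : ℝ => (1 - t) * ‖z - y‖ ^ 2) (nhdsWithin 0 (Set.Ioi 0))
      (nhds ((1 - 0) * ‖z - y‖ ^ 2)) := by
    apply Filter.Tendsto.mono_left _ nhdsWithin_le_nhds
    exact Continuous.tendsto (by fun_prop) 0
  rw [sub_zero, one_mul] at hc
  refine le_of_tendsto hc ?_
  filter_upwards [Ioo_mem_nhdsGT (zero_lt_one (α := ℝ))] with t ht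
  exact key t ht.1 ht.2

theorem spp_linear_convergence_interpolation
    {n : ℕ} {Ω : Type} [MeasurableSpace Ω] (P : Measure Ω) [IsProbabilityMeasure P]
    -- the components F(·;ξ): proper convex lsc
    (D : Ω → Set (EuclideanSpace ℝ (Fin n)))
    (F : Ω → EuclideanSpace ℝ (Fin n) → ℝ)
    (hDne : ∀ ξ, (D ξ).Nonempty)
    (hDconv : ∀ ξ, Convex ℝ (D ξ))
    (hFconv : ∀ ξ, ConvexOn ℝ (D ξ) (F ξ))
    (hFlsc : ∀ ξ, IsClosed {p : EuclideanSpace ℝ (Fin n) × ℝ | p.1 ∈ D ξ ∧ F ξ p.1 ≤ p.2})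
    -- optimal set X* and optimal value F*
    (Xstar : Set (EuclideanSpace ℝ (Fin n))) (Fstar : ℝ)
    (hXstar : ∀ x, x ∈ Xstar ↔
      ((∀ ξ, x ∈ D ξ) ∧ Integrable (fun ξ => F ξ x) P ∧ ∫ ξ, F ξ x ∂P = Fstar))
    (hFmin : ∀ x, (∀ ξ, x ∈ D ξ) → Integrable (fun ξ => F ξ x) P → Fstar ≤ ∫ ξ, F ξ x ∂P)
    (hXstarne : Xstar.Nonempty)
    -- proximal map z_μ(x;ξ), Moreau envelope integrability, F_μ*
    (prox : ℝ → EuclideanSpace ℝ (Fin n) → Ω → EuclideanSpace ℝ (Fin n))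
    (hprox : ∀ μ, 0 < μ → ∀ x ξ, prox μ x ξ ∈ D ξ ∧ ∀ y ∈ D ξ,
      F ξ (prox μ x ξ) + ‖prox μ x ξ - x‖ ^ 2 / (2 * μ)
        ≤ F ξ y + ‖y - x‖ ^ 2 / (2 * μ))
    (hFmuint : ∀ μ, 0 < μ → ∀ x, Integrable
      (fun ξ => F ξ (prox μ x ξ) + ‖prox μ x ξ - x‖ ^ 2 / (2 * μ)) P)
    (Fmustar : ℝ → ℝ)
    (hFmustar : ∀ μ, 0 < μ → IsGLB
      (Set.range fun x => ∫ ξ, (F ξ (prox μ x ξ) + ‖prox μ x ξ - x‖ ^ 2 / (2 * μ)) ∂P)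
      (Fmustar μ))
    -- weak linear regularity with constants σ_{F,μ} (nonincreasing in μ) and β = 0
    (σ : ℝ → ℝ)
    (hσpos : ∀ μ, 0 < μ → 0 < σ μ)
    (hσmono : AntitoneOn σ (Set.Ioi (0 : ℝ)))
    (hWLR : ∀ μ, 0 < μ → ∀ x, σ μ / 2 * (infDist x Xstar) ^ 2
      ≤ (∫ ξ, (F ξ (prox μ x ξ) + ‖prox μ x ξ - x‖ ^ 2 / (2 * μ)) ∂P) - Fmustar μ)
    -- interpolation: 0 ∈ ∂F(x*;ξ) for every x* ∈ X* and every ξ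
    (hinterp : ∀ xs ∈ Xstar, ∀ ξ, xs ∈ D ξ ∧ ∀ y ∈ D ξ, F ξ xs ≤ F ξ y)
    -- constant stepsize μ > 0 with μ σ_{F,μ} ≤ 1
    (μ : ℝ) (hμ : 0 < μ) (hμσ : μ * σ μ ≤ 1)
    -- the SPP trajectory: x^k is a function of the first k i.i.d. samples
    (x0 : EuclideanSpace ℝ (Fin n))
    (traj : (k : ℕ) → (Fin k → Ω) → EuclideanSpace ℝ (Fin n))
    (htraj0 : ∀ ω, traj 0 ω = x0)
    (htrajS : ∀ k (ω : Fin (k + 1) → Ω),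
      traj (k + 1) ω = prox μ (traj k fun i => ω i.castSucc) (ω (Fin.last k))) :
    ∀ k : ℕ,
      (∫ ω, (infDist (traj k ω) Xstar) ^ 2 ∂(Measure.pi fun _ : Fin k => P))
        ≤ (1 - μ * σ μ) ^ k * (infDist x0 Xstar) ^ 2 := by
  have hstep : ∀ x, ∫⁻ ξ, ENNReal.ofReal ((infDist (prox μ x ξ) Xstar) ^ 2) ∂P
      ≤ ENNReal.ofReal ((1 - μ * σ μ) * (infDist x Xstar) ^ 2) := by
    intro x
    have h1 : ∀ xs ∈ Xstar, ∫⁻ ξ, ENNReal.ofReal ((infDist (prox μ x ξ) Xstar) ^ 2) ∂P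
        ≤ ENNReal.ofReal (‖xs - x‖ ^ 2 - μ * σ μ * (infDist x Xstar) ^ 2) := by
      intro xs hxs
      obtain ⟨-, hi, hv⟩ := (hXstar xs).1 hxs
      have hle : Fstar ≤ Fmustar μ := by
        refine (hFmustar μ hμ).2 ?_
        rintro _ ⟨w, rfl⟩
        rw [← hv]
        refine integral_mono hi (hFmuint μ hμ w) fun ξ => ?_
        have a := (hinterp xs hxs ξ).2 _ (hprox μ hμ w ξ).1
        have b : 0 ≤ ‖prox μ w ξ - w‖ ^ 2 / (2 * μ) := by positivity
        simp only
        linarith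
      have hpt : ∀ ξ, (infDist (prox μ x ξ) Xstar) ^ 2 ≤ ‖xs - x‖ ^ 2 + 2 * μ * F ξ xs -
          2 * μ * (F ξ (prox μ x ξ) + ‖prox μ x ξ - x‖ ^ 2 / (2 * μ)) := by
        intro ξ
        refine le_trans ?_ (spp_three_point (D ξ) (F ξ) (hFconv ξ) μ hμ x _ xs
          (hprox μ hμ x ξ).1 (hinterp xs hxs ξ).1 (hprox μ hμ x ξ).2)
        rw [← dist_eq_norm]
        exact pow_le_pow_left₀ infDist_nonneg (infDist_le_dist_of_mem hxs) 2
      have hi1 : Integrable (fun ξ => ‖xs - x‖ ^ 2 + 2 * μ * F ξ xs) P :=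
        (integrable_const _).add (hi.const_mul _)
      have hi2 := (hFmuint μ hμ x).const_mul (2 * μ)
      have hi3 : Integrable (fun ξ => ‖xs - x‖ ^ 2 + 2 * μ * F ξ xs -
          2 * μ * (F ξ (prox μ x ξ) + ‖prox μ x ξ - x‖ ^ 2 / (2 * μ))) P := hi1.sub hi2
      refine (lintegral_mono fun ξ => ENNReal.ofReal_le_ofReal (hpt ξ)).trans ?_
      rw [← ofReal_integral_eq_lintegral_ofReal hi3
        (Filter.Eventually.of_forall fun ξ => (sq_nonneg _).trans (hpt ξ))]
      apply ENNReal.ofReal_le_ofReal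
      rw [integral_sub hi1 hi2, integral_add (integrable_const _) (hi.const_mul _),
        integral_const_mul, integral_const_mul, hv]
      simp only [integral_const, probReal_univ, one_smul]
      have hw := hWLR μ hμ x
      nlinarith
    have h2 : ∀ r, infDist x Xstar < r →
        ∫⁻ ξ, ENNReal.ofReal ((infDist (prox μ x ξ) Xstar) ^ 2) ∂P
        ≤ ENNReal.ofReal (r ^ 2 - μ * σ μ * (infDist x Xstar) ^ 2) := by
      intro r hr
      obtain ⟨xs, hxs, hd⟩ := (infDist_lt_iff hXstarne).1 hr
      refine (h1 xs hxs).trans (ENNReal.ofReal_le_ofReal ?_)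
      rw [← dist_eq_norm, dist_comm]
      have := pow_le_pow_left₀ dist_nonneg hd.le 2
      linarith
    have hc : Filter.Tendsto
        (fun r : ℝ => ENNReal.ofReal (r ^ 2 - μ * σ μ * (infDist x Xstar) ^ 2))
        (nhdsWithin (infDist x Xstar) (Set.Ioi (infDist x Xstar)))
        (nhds (ENNReal.ofReal ((infDist x Xstar) ^ 2 - μ * σ μ * (infDist x Xstar) ^ 2))) := by
      apply Filter.Tendsto.mono_left _ nhdsWithin_le_nhds
      apply (ENNReal.continuous_ofReal.tendsto _).comp
      exact Continuous.tendsto (by fun_prop) (infDist x Xstar)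
    have h3 := ge_of_tendsto hc (Filter.eventually_of_mem self_mem_nhdsWithin h2)
    rwa [sub_mul, one_mul]
  have hρ : 0 ≤ 1 - μ * σ μ := by linarith
  have hind : ∀ k : ℕ, ∫⁻ ω, ENNReal.ofReal ((infDist (traj k ω) Xstar) ^ 2)
      ∂(Measure.pi fun _ : Fin k => P)
      ≤ ENNReal.ofReal ((1 - μ * σ μ) ^ k * (infDist x0 Xstar) ^ 2) := by
    intro k
    induction k with
    | zero => simp [htraj0]
    | succ k ih =>
      have hmp := (measurePreserving_piFinSuccAbove (fun _ : Fin (k + 1) => P) (Fin.last k))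
      have e1 : ∫⁻ ω, ENNReal.ofReal ((infDist (traj (k + 1) ω) Xstar) ^ 2)
          ∂(Measure.pi fun _ : Fin (k + 1) => P) =
          ∫⁻ p : Ω × (Fin k → Ω), ENNReal.ofReal ((infDist (prox μ (traj k p.2) p.1) Xstar) ^ 2)
            ∂(P.prod (Measure.pi fun _ : Fin k => P)) := by
        rw [← hmp.map_eq, lintegral_map_equiv]
        refine lintegral_congr fun ω => ?_
        rw [htrajS]
        simp [MeasurableEquiv.piFinSuccAbove, Fin.insertNthEquiv, Fin.removeNth_last, Fin.init_def]
      rw [e1, ← Measure.prod_swap]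
      have e2 : ∀ (g : Ω × (Fin k → Ω) → ENNReal),
          ∫⁻ p, g p ∂(Measure.map Prod.swap ((Measure.pi fun _ : Fin k => P).prod P)) =
          ∫⁻ p, g p.swap ∂((Measure.pi fun _ : Fin k => P).prod P) := fun g =>
        lintegral_map_equiv g MeasurableEquiv.prodComm
      rw [e2]
      refine (lintegral_prod_le _).trans ?_
      simp only [Prod.swap]
      refine (lintegral_mono fun ω => hstep (traj k ω)).trans ?_
      simp_rw [ENNReal.ofReal_mul hρ]
      rw [lintegral_const_mul' _ _ ENNReal.ofReal_ne_top, pow_succ', mul_assoc,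
        ENNReal.ofReal_mul hρ]
      gcongr
  intro k
  have hR : 0 ≤ (1 - μ * σ μ) ^ k * (infDist x0 Xstar) ^ 2 := by positivity
  by_cases hI : Integrable (fun ω => (infDist (traj k ω) Xstar) ^ 2)
      (Measure.pi fun _ : Fin k => P)
  · rw [← ENNReal.ofReal_le_ofReal_iff hR, ofReal_integral_eq_lintegral_ofReal hI
      (Filter.Eventually.of_forall fun ω => sq_nonneg _)]
    exact hind k
  · rw [integral_undef hI]
    exact hR
end
end

section
/- Let {X_ξ}_{ξ∈Ω} be closed convex sets with nonempty intersection X = ∩_ξ X_ξ that are linearly regular with constant σ_X ∈ (0,1]. Let {x^k} be generated by stochastic alternating projections: x^{k+1} = π_{X_{ξ_k}}(x^k) with ξ_k drawn i.i.d. with distribution P. Then E[ dist_X²(x^k) ] ≤ (1 − σ_X)^k · dist_X²(x^0) for all k ≥ 0. -/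
/- Statement 13: linear convergence of stochastic alternating projections.
If the closed convex sets `{X_ξ}` with nonempty intersection `X = ∩_ξ X_ξ` are linearly
regular with constant `σ_X ∈ (0,1]`, then the SAP iterates
`x^{k+1} = π_{X_{ξ_k}}(x^k)` (i.i.d. samples `ξ_k ∼ P`) satisfy
`E[dist²_X(x^k)] ≤ (1 − σ_X)^k ⋅ dist²_X(x^0)` for all `k ≥ 0`.
The iterate `x^k` is a function of the first `k` samples, the expectation being taken
with respect to the `k`-fold product measure; `π` is the metric projection, characterized
as the closest point of the set. -/

open MeasureTheory Metric Set

noncomputable section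

theorem sap_proj_ineq {n : ℕ} (C Y : Set (EuclideanSpace ℝ (Fin n)))
    (hC : Convex ℝ C) (hYcl : IsClosed Y) (hYne : Y.Nonempty) (hYC : Y ⊆ C)
    (x p : EuclideanSpace ℝ (Fin n)) (hp : p ∈ C) (hmin : ∀ z ∈ C, ‖x - p‖ ≤ ‖x - z‖) :
    (infDist p Y) ^ 2 ≤ (infDist x Y) ^ 2 - (infDist x C) ^ 2 := by
  obtain ⟨z, hz, hzd⟩ := hYcl.exists_infDist_eq_dist hYne x
  have hinf : ‖x - p‖ = ⨅ w : C, ‖x - w‖ := by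
    have : Nonempty C := ⟨⟨p, hp⟩⟩
    apply le_antisymm
    · exact le_ciInf fun w => hmin w w.2
    · exact ciInf_le (f := fun w : C => ‖x - w‖)
        ⟨0, by rintro _ ⟨w, rfl⟩; exact norm_nonneg _⟩ ⟨p, hp⟩
  have hin := (norm_eq_iInf_iff_real_inner_le_zero hC hp).1 hinf z (hYC hz)
  have h1 : infDist p Y ≤ ‖p - z‖ := by
    rw [← dist_eq_norm]; exact infDist_le_dist_of_mem hz
  have h2 : infDist x C ≤ ‖x - p‖ := by
    rw [← dist_eq_norm]; exact infDist_le_dist_of_mem hp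
  have h3 : ‖x - z‖ ^ 2 = ‖x - p‖ ^ 2 - 2 * inner ℝ (x - p) (z - p) + ‖z - p‖ ^ 2 := by
    rw [← norm_sub_sq_real]; congr 2; abel
  rw [hzd, dist_eq_norm, h3, norm_sub_rev z p]
  have h1' := pow_le_pow_left₀ infDist_nonneg h1 2
  have h2' := pow_le_pow_left₀ infDist_nonneg h2 2
  linarith

theorem sap_linear_convergence
    {n : ℕ} {Ω : Type} [MeasurableSpace Ω] (P : Measure Ω) [IsProbabilityMeasure P]
    -- closed convex sets with nonempty intersection
    (X : Ω → Set (EuclideanSpace ℝ (Fin n)))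
    (hXclosed : ∀ ξ, IsClosed (X ξ)) (hXconv : ∀ ξ, Convex ℝ (X ξ))
    (hXXne : (⋂ ξ, X ξ).Nonempty)
    -- linear regularity with constant σ_X ∈ (0,1]
    (σX : ℝ) (hσX : σX ∈ Set.Ioc (0 : ℝ) 1)
    (hdint : ∀ x, Integrable (fun ξ => (infDist x (X ξ)) ^ 2) P)
    (hLR : ∀ x, σX * (infDist x (⋂ ξ, X ξ)) ^ 2 ≤ ∫ ξ, (infDist x (X ξ)) ^ 2 ∂P)
    -- the metric projection onto each X_ξ
    (proj : Ω → EuclideanSpace ℝ (Fin n) → EuclideanSpace ℝ (Fin n))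
    (hproj : ∀ ξ x, proj ξ x ∈ X ξ ∧ ∀ z ∈ X ξ, ‖x - proj ξ x‖ ≤ ‖x - z‖)
    -- the SAP trajectory: x^k is a function of the first k i.i.d. samples
    (x0 : EuclideanSpace ℝ (Fin n))
    (traj : (k : ℕ) → (Fin k → Ω) → EuclideanSpace ℝ (Fin n))
    (htraj0 : ∀ ω, traj 0 ω = x0)
    (htrajS : ∀ k (ω : Fin (k + 1) → Ω),
      traj (k + 1) ω = proj (ω (Fin.last k)) (traj k fun i => ω i.castSucc)) :
    ∀ k : ℕ,
      (∫ ω, (infDist (traj k ω) (⋂ ξ, X ξ)) ^ 2 ∂(Measure.pi fun _ : Fin k => P))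
        ≤ (1 - σX) ^ k * (infDist x0 (⋂ ξ, X ξ)) ^ 2 := by
  intro k
  have h1σ : 0 ≤ 1 - σX := by linarith [hσX.2]
  have hYcl : IsClosed (⋂ ξ, X ξ) := isClosed_iInter hXclosed
  induction k generalizing x0 traj with
  | zero => simp [htraj0]
  | succ k ih =>
    have hstep : ∀ ξ, (infDist (proj ξ x0) (⋂ ξ, X ξ)) ^ 2
        ≤ (infDist x0 (⋂ ξ, X ξ)) ^ 2 - (infDist x0 (X ξ)) ^ 2 := fun ξ =>
      sap_proj_ineq (X ξ) _ (hXconv ξ) hYcl hXXne (iInter_subset _ ξ) x0 _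
        (hproj ξ x0).1 (hproj ξ x0).2
    have hih : ∀ ξ, (∫ ω, (infDist (traj (k + 1) (Fin.cons ξ ω)) (⋂ ξ, X ξ)) ^ 2
          ∂(Measure.pi fun _ : Fin k => P))
        ≤ (1 - σX) ^ k * (infDist (proj ξ x0) (⋂ ξ, X ξ)) ^ 2 := by
      intro ξ
      refine ih (proj ξ x0) (fun j ω => traj (j + 1) (Fin.cons ξ ω)) ?_ ?_
      · intro ω
        simp only [htrajS, htraj0]
        rfl
      · intro j ω
        rw [htrajS (j + 1)]
        have he : (fun i : Fin (j + 1) => (Fin.cons ξ ω : Fin (j + 2) → Ω) i.castSucc)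
            = Fin.cons ξ (fun i : Fin j => ω i.castSucc) := by
          funext i
          refine Fin.cases ?_ (fun i => ?_) i
          · rfl
          · rfl
        rw [he]
        rfl
    by_cases hint : Integrable (fun ω => (infDist (traj (k + 1) ω) (⋂ ξ, X ξ)) ^ 2)
        (Measure.pi fun _ : Fin (k + 1) => P)
    · have hmp := (measurePreserving_piFinSuccAbove (fun _ : Fin (k + 1) => P) 0).symm
      have heq : (∫ ω, (infDist (traj (k + 1) ω) (⋂ ξ, X ξ)) ^ 2
            ∂(Measure.pi fun _ : Fin (k + 1) => P))
          = ∫ ξ, ∫ ω, (infDist (traj (k + 1) (Fin.cons ξ ω)) (⋂ ξ, X ξ)) ^ 2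
            ∂(Measure.pi fun _ : Fin k => P) ∂P := by
        rw [← hmp.integral_comp (MeasurableEquiv.measurableEmbedding _)]
        rw [← hmp.integrable_comp_emb (MeasurableEquiv.measurableEmbedding _)] at hint
        refine (integral_prod _ hint).trans ?_
        simp [MeasurableEquiv.piFinSuccAbove, Fin.insertNthEquiv]
      rw [heq]
      calc _ ≤ ∫ ξ, (1 - σX) ^ k *
              ((infDist x0 (⋂ ξ, X ξ)) ^ 2 - (infDist x0 (X ξ)) ^ 2) ∂P := by
            refine integral_mono_of_nonneg ?_ ?_ ?_
            · exact Filter.Eventually.of_forall fun ξ => integral_nonneg fun ω => sq_nonneg _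
            · exact ((integrable_const _).sub (hdint x0)).const_mul _
            · exact Filter.Eventually.of_forall fun ξ => (hih ξ).trans
                (mul_le_mul_of_nonneg_left (hstep ξ) (pow_nonneg h1σ k))
        _ = (1 - σX) ^ k *
              ((infDist x0 (⋂ ξ, X ξ)) ^ 2 - ∫ ξ, (infDist x0 (X ξ)) ^ 2 ∂P) := by
            rw [integral_const_mul, integral_sub (integrable_const _) (hdint x0)]
            simp
        _ ≤ (1 - σX) ^ k * ((1 - σX) * (infDist x0 (⋂ ξ, X ξ)) ^ 2) := by
            refine mul_le_mul_of_nonneg_left ?_ (pow_nonneg h1σ k)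
            linarith [hLR x0]
        _ = _ := by ring
    · rw [integral_undef hint]
      exact mul_nonneg (pow_nonneg h1σ _) (sq_nonneg _)
end
end

section
/- Let f: ℝ^n → ℝ be convex, differentiable, and M-restricted strongly convex for a symmetric positive semidefinite n×n matrix M, and for μ > 0 let z_μ(x) := argmin_z { f(z) + (1/(2μ))‖z − x‖² } be its proximal operator. Then for all x, y ∈ ℝ^n: ‖(I_n + μM)^{1/2}( z_μ(x) − z_μ(y) )‖ ≤ ‖(I_n + μM)^{−1/2}( x − y )‖. -/
/- Statement 17: the contraction property (eq. (contraction)).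
For `f` convex differentiable and `M`-restricted strongly convex (`M ⪰ 0` symmetric),
with proximal operator `z_μ` (so `∇f(z_μ(x)) = (x − z_μ(x))/μ`), one has for all `x, y`:
`‖(I + μM)^{1/2}(z_μ(x) − z_μ(y))‖ ≤ ‖(I + μM)^{−1/2}(x − y)‖`.
The square root `S = (I + μM)^{1/2}` is characterized as the positive semidefinite matrix
with `S·S = I + μM`, and `(I + μM)^{−1/2} = S⁻¹`. -/

open Metric Set
open scoped RealInnerProductSpace

noncomputable section

theorem rsc_prox_contraction
    {n : ℕ}
    (f : EuclideanSpace ℝ (Fin n) → ℝ)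
    (fgrad : EuclideanSpace ℝ (Fin n) → EuclideanSpace ℝ (Fin n))
    (M : Matrix (Fin n) (Fin n) ℝ)
    (hM : M.PosSemidef)
    -- f convex differentiable, M-restricted strongly convex
    (hconv : ConvexOn ℝ Set.univ f)
    (hgrad : ∀ x, HasGradientAt f (fgrad x) x)
    (hRSC : ∀ x y, ⟪x - y, Matrix.toEuclideanLin M (x - y)⟫ ≤ ⟪fgrad x - fgrad y, x - y⟫)
    -- the proximal operator with stepsize μ > 0
    (μ : ℝ) (hμ : 0 < μ)
    (z : EuclideanSpace ℝ (Fin n) → EuclideanSpace ℝ (Fin n))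
    (hproxmin : ∀ x y, f (z x) + ‖z x - x‖ ^ 2 / (2 * μ) ≤ f y + ‖y - x‖ ^ 2 / (2 * μ))
    (hproxopt : ∀ x, fgrad (z x) = μ⁻¹ • (x - z x))
    -- the positive semidefinite square root S = (I + μM)^{1/2}
    (S : Matrix (Fin n) (Fin n) ℝ)
    (hS : S.PosSemidef) (hSsq : S * S = 1 + μ • M) :
    ∀ x y, ‖Matrix.toEuclideanLin S (z x - z y)‖
      ≤ ‖Matrix.toEuclideanLin S⁻¹ (x - y)‖ := by
  intro x y
  have hPD : (1 + μ • M).PosDef := Matrix.PosDef.one.add_posSemidef (hM.smul hμ.le)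
  have hu : IsUnit S.det := by
    have h := hPD.det_pos
    rw [← hSsq, Matrix.det_mul] at h
    exact isUnit_iff_ne_zero.mpr (fun h0 => by simp [h0] at h)
  have hsym : ∀ u v, ⟪Matrix.toEuclideanLin S u, v⟫ = ⟪u, Matrix.toEuclideanLin S v⟫ :=
    Matrix.isHermitian_iff_isSymmetric.mp hS.isHermitian
  have hSS : ∀ v, Matrix.toEuclideanLin S (Matrix.toEuclideanLin S v)
      = v + μ • Matrix.toEuclideanLin M v := by
    intro v
    have h : Matrix.toEuclideanLin S (Matrix.toEuclideanLin S v)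
        = Matrix.toEuclideanLin (S * S) v := by
      ext i
      simp [Matrix.toLpLin_apply, Matrix.mulVec_mulVec]
    rw [h, hSsq]
    ext i
    simp [Matrix.toLpLin_apply, Matrix.add_mulVec, Matrix.smul_mulVec]
  have hSi : ∀ v, Matrix.toEuclideanLin S (Matrix.toEuclideanLin S⁻¹ v) = v := by
    intro v
    ext i
    simp [Matrix.toLpLin_apply, Matrix.mulVec_mulVec, Matrix.mul_nonsing_inv S hu]
  have hr := hRSC (z x) (z y)
  rw [hproxopt, hproxopt] at hr
  have e : μ⁻¹ • (x - z x) - μ⁻¹ • (y - z y) = μ⁻¹ • ((x - y) - (z x - z y)) := by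
    module
  rw [e] at hr
  generalize z x - z y = d at *
  generalize x - y = w at *
  rw [real_inner_smul_left, inner_sub_left, inv_mul_eq_div, le_div_iff₀ hμ] at hr
  have h1 : ‖Matrix.toEuclideanLin S d‖ ^ 2 = ⟪d, d⟫ + μ * ⟪d, Matrix.toEuclideanLin M d⟫ := by
    rw [← real_inner_self_eq_norm_sq, hsym, hSS, inner_add_right, real_inner_smul_right]
  have h2 : ⟪w, d⟫ ≤ ‖Matrix.toEuclideanLin S⁻¹ w‖ * ‖Matrix.toEuclideanLin S d‖ := by
    conv_lhs => rw [← hSi w]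
    rw [hsym]
    exact real_inner_le_norm _ _
  have h3 := norm_nonneg (Matrix.toEuclideanLin S d)
  have h4 := norm_nonneg (Matrix.toEuclideanLin S⁻¹ w)
  by_contra! hlt
  nlinarith
end
end
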